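/- Let E be a real inner product space, let ε ∈ (0, π), and let a be a real number with a·sin(ε/2) > 1 and a ≥ 1. If u₁, u₂, w₁, w₂ are unit vectors in E satisfying (u₁ + u₂) + a²·(w₁ + w₂) = 0, then sin((π − θ₃)/2) ≤ 1/a², and consequently π − θ₃ < ε, where θ₃ ∈ [0, π] is the angle between w₁ and w₂. -/

import Mathlib

/-!
Two unit vectors at angle `θ` have a sum of length `2 cos (θ / 2) = 2 sin ((π - θ) / 2)`. In the
stationarity condition, this length times the weight `c` is balanced by two vectors of norm at
most `1`, so `sin ((π - θ) / 2) ≤ 1 / c`; monotonicity of `sin` on `[-π / 2, π / 2]` then bounds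
`π - θ`.
-/

open InnerProductGeometry Real

section

variable {E : Type*} [NormedAddCommGroup E] [InnerProductSpace ℝ E]

theorem norm_add_eq_two_mul_norm_mul_cos_half_angle {x y : E} (h : ‖x‖ = ‖y‖) :
    ‖x + y‖ = 2 * ‖x‖ * cos (angle x y / 2) := by
  have hcos : 0 ≤ cos (angle x y / 2) :=
    cos_nonneg_of_mem_Icc
      ⟨by linarith [angle_nonneg x y, pi_pos], by linarith [angle_le_pi x y]⟩
  have hinner : inner ℝ x y = ‖x‖ ^ 2 * (2 * cos (angle x y / 2) ^ 2 - 1) := by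
    rw [← cos_two_mul, mul_div_cancel₀ _ two_ne_zero, sq]
    nth_rw 2 [h]
    rw [mul_comm, cos_angle_mul_norm_mul_norm]
  rw [← sq_eq_sq₀ (norm_nonneg _) (by positivity), norm_add_sq_real, hinner, ← h]
  ring

theorem norm_eq_abs_mul_sin_of_add_smul_add_eq_zero {c : ℝ} {u x y : E}
    (hxy : ‖x‖ = ‖y‖) (h : u + c • (x + y) = 0) :
    ‖u‖ = |c| * (2 * ‖x‖ * sin ((π - angle x y) / 2)) := by
  rw [eq_neg_of_add_eq_zero_left h, norm_neg, norm_smul, norm_eq_abs,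
    norm_add_eq_two_mul_norm_mul_cos_half_angle hxy, sub_div, sin_pi_div_two_sub]

end

theorem lt_of_sin_lt_sin {x y : ℝ} (hx : x ≤ π / 2) (hy : -(π / 2) ≤ y) (h : sin x < sin y) :
    x < y :=
  lt_of_not_ge fun hyx ↦ h.not_ge (sin_le_sin_of_le_of_le_pi_div_two hy hx hyx)

theorem figure_eight_wide_angle_sq_general
    {E : Type*} [NormedAddCommGroup E] [InnerProductSpace ℝ E]
    {ε c : ℝ} (hε : 0 < ε) (hc : 0 < c) (hcε : 1 < c * sin (ε / 2))
    {u₁ u₂ w₁ w₂ : E} (hu₁ : ‖u₁‖ ≤ 1) (hu₂ : ‖u₂‖ ≤ 1) (hw₁ : ‖w₁‖ = 1) (hw₂ : ‖w₂‖ = 1)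
    (hstat : (u₁ + u₂) + c • (w₁ + w₂) = 0) :
    sin ((π - angle w₁ w₂) / 2) ≤ 1 / c ∧ π - angle w₁ w₂ < ε := by
  have hnorm : ‖u₁ + u₂‖ = 2 * (c * sin ((π - angle w₁ w₂) / 2)) := by
    rw [norm_eq_abs_mul_sin_of_add_smul_add_eq_zero (hw₁.trans hw₂.symm) hstat,
      abs_of_pos hc, hw₁]
    ring
  have hsin : sin ((π - angle w₁ w₂) / 2) ≤ 1 / c :=
    (le_div_iff₀' hc).2 (by linarith [norm_add_le_of_le hu₁ hu₂])
  have hlt : sin ((π - angle w₁ w₂) / 2) < sin (ε / 2) :=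
    hsin.trans_lt ((div_lt_iff₀' hc).2 hcε)
  have hhalf : (π - angle w₁ w₂) / 2 < ε / 2 :=
    lt_of_sin_lt_sin (by linarith [angle_nonneg w₁ w₂]) (by linarith [pi_pos]) hlt
  exact ⟨hsin, by linarith⟩

/-- Case 3 of the figure-eight example: if `a ≥ 1`, `a·sin(ε/2) > 1` and the unit
vectors satisfy `(u₁ + u₂) + a² • (w₁ + w₂) = 0`, then
`sin((π − θ₃)/2) ≤ 1/a²` and `π − θ₃ < ε`, where `θ₃` is the angle between
`w₁` and `w₂`. -/
theorem figure_eight_wide_angle_sq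
    {E : Type*} [NormedAddCommGroup E] [InnerProductSpace ℝ E]
    (ε : ℝ) (hε0 : 0 < ε) (hεπ : ε < Real.pi)
    (a : ℝ) (ha : 1 < a * Real.sin (ε / 2)) (ha1 : 1 ≤ a)
    (u₁ u₂ w₁ w₂ : E) (hu₁ : ‖u₁‖ = 1) (hu₂ : ‖u₂‖ = 1)
    (hw₁ : ‖w₁‖ = 1) (hw₂ : ‖w₂‖ = 1)
    (hstat : (u₁ + u₂) + a ^ 2 • (w₁ + w₂) = 0) :
    Real.sin ((Real.pi - InnerProductGeometry.angle w₁ w₂) / 2) ≤ 1 / a ^ 2 ∧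
      Real.pi - InnerProductGeometry.angle w₁ w₂ < ε :=
  figure_eight_wide_angle_sq_general hε0 (by positivity)
    (by rw [sq, mul_assoc]; exact one_lt_mul ha1 ha) hu₁.le hu₂.le hw₁ hw₂ hstat
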